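/- Both R-linear maps U₋^{≥0} ⊗_R U₋^{<0} → U₋ and U₋^{<0} ⊗_R U₋^{≥0} → U₋ induced by multiplication are bijective. -/

import Mathlib

open scoped TensorProduct

noncomputable section

/-- The base ring `R = ℂ[[ℏ]]`. -/
abbrev R : Type := PowerSeries ℂ

/-- The formal variable `ℏ ∈ ℂ[[ℏ]]`. -/
def hbar : R := PowerSeries.X

/-- The generators `f_n` of the free algebra. -/
def Fgen (n : ℤ) : FreeAlgebra R ℤ := FreeAlgebra.ι R n

/-- The defining relations of `U_ℏ𝔫₋`:
`f_{m+1}f_n − f_n f_{m+1} − f_m f_{n+1} + f_{n+1}f_m = −ℏ(f_m f_n + f_n f_m)`. -/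
inductive FRel : FreeAlgebra R ℤ → FreeAlgebra R ℤ → Prop
  | current (m n : ℤ) :
      FRel (Fgen (m + 1) * Fgen n - Fgen n * Fgen (m + 1)
              - Fgen m * Fgen (n + 1) + Fgen (n + 1) * Fgen m)
        (-(hbar • (Fgen m * Fgen n + Fgen n * Fgen m)))

/-- `U₋ = U_ℏ𝔫₋`, the quotient of the free `R`-algebra on the `f_n`, `n ∈ ℤ`,
by the two-sided ideal generated by the defining relations. -/
abbrev Uminus : Type := RingQuot FRel

/-- The image of `f_n` in `U₋`. -/
def f (n : ℤ) : Uminus := RingQuot.mkAlgHom R FRel (Fgen n)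

/-- `U₋^{≥0}`, the `R`-subalgebra of `U₋` generated by the `f_n` with `n ≥ 0`. -/
def Umge : Subalgebra R Uminus := Algebra.adjoin R (Set.range fun n : ℕ => f (n : ℤ))

/-- `U₋^{<0}`, the `R`-subalgebra of `U₋` generated by the `f_n` with `n < 0`. -/
def Umlt : Subalgebra R Uminus := Algebra.adjoin R {x : Uminus | ∃ n : ℤ, n < 0 ∧ x = f n}


/-! ## The reduction modulo `ℏ` -/

/-- The derivation of the polynomial ring sending `X n` to `a ^ n`. -/
def derD (a : ℂˣ) : Derivation ℂ (MvPolynomial ℤ ℂ) (MvPolynomial ℤ ℂ) :=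
  MvPolynomial.mkDerivation ℂ fun n : ℤ => MvPolynomial.C (((a ^ n : ℂˣ) : ℂ))

theorem derD_X (a : ℂˣ) (n : ℤ) :
    derD a (MvPolynomial.X n) = MvPolynomial.C (((a ^ n : ℂˣ) : ℂ)) :=
  MvPolynomial.mkDerivation_X _ _ _

theorem derD_C (a : ℂˣ) (c : ℂ) : derD a (MvPolynomial.C c) = 0 :=
  MvPolynomial.derivation_C _ _

theorem derD_comm (a b : ℂˣ) (p : MvPolynomial ℤ ℂ) :
    derD a (derD b p) = derD b (derD a p) := by
  have h : ⁅derD a, derD b⁆ = 0 := by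
    apply MvPolynomial.derivation_ext
    intro i
    rw [Derivation.commutator_apply, derD_X, derD_X, derD_C, derD_C]
    simp
  have := congrArg (fun d => d p) h
  rw [Derivation.commutator_apply] at this
  simpa [sub_eq_zero] using this

instance derD_rightComm :
    RightCommutative (fun (p : MvPolynomial ℤ ℂ) (a : ℂˣ) => derD a p) :=
  ⟨fun p a b => derD_comm b a p⟩

/-- Iterated application of the derivations `derD a`. -/
def derM (s : Multiset ℂˣ) (p : MvPolynomial ℤ ℂ) : MvPolynomial ℤ ℂ :=
  s.foldl (fun p a => derD a p) p

theorem derM_zero (p : MvPolynomial ℤ ℂ) : derM 0 p = p := rfl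

theorem derM_cons (a : ℂˣ) (s : Multiset ℂˣ) (p : MvPolynomial ℤ ℂ) :
    derM (a ::ₘ s) p = derM s (derD a p) := Multiset.foldl_cons _ _ _ _

theorem derM_add (s : Multiset ℂˣ) (p q : MvPolynomial ℤ ℂ) :
    derM s (p + q) = derM s p + derM s q := by
  induction s using Multiset.induction generalizing p q with
  | empty => rfl
  | cons a s ih => rw [derM_cons, map_add, ih, derM_cons, derM_cons]

theorem derM_C_mul (s : Multiset ℂˣ) (c : ℂ) (p : MvPolynomial ℤ ℂ) :
    derM s (MvPolynomial.C c * p) = MvPolynomial.C c * derM s p := by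
  induction s using Multiset.induction generalizing p with
  | empty => rfl
  | cons a s ih =>
    rw [derM_cons, Derivation.leibniz, derD_C, smul_zero, add_zero, smul_eq_mul, ih, derM_cons]

/-- `derM s` as a linear map. -/
def derL (s : Multiset ℂˣ) : MvPolynomial ℤ ℂ →ₗ[ℂ] MvPolynomial ℤ ℂ where
  toFun := derM s
  map_add' := derM_add s
  map_smul' c p := by
    simp only [MvPolynomial.smul_eq_C_mul, derM_C_mul, RingHom.id_apply]

theorem derM_X_mul (s : Multiset ℂˣ) (n : ℤ) (p : MvPolynomial ℤ ℂ) :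
    derM s (MvPolynomial.X n * p) = MvPolynomial.X n * derM s p +
      (s.map fun a => MvPolynomial.C (((a ^ n : ℂˣ) : ℂ)) * derM (s.erase a) p).sum := by
  induction s using Multiset.induction generalizing p with
  | empty => simp [derM_zero]
  | cons a s ih =>
    rw [derM_cons, Derivation.leibniz, derD_X, smul_eq_mul, smul_eq_mul, derM_add, ih,
      mul_comm p, derM_C_mul, Multiset.map_cons, Multiset.sum_cons,
      Multiset.erase_cons_head, derM_cons]
    have : (s.map fun b => MvPolynomial.C (((b ^ n : ℂˣ) : ℂ)) *
          derM ((a ::ₘ s).erase b) p) =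
        (s.map fun b => MvPolynomial.C (((b ^ n : ℂˣ) : ℂ)) * derM (s.erase b) (derD a p)) := by
      apply Multiset.map_congr rfl
      intro b hb
      by_cases hab : a = b
      · subst hab
        rw [Multiset.erase_cons_head, ← derM_cons, Multiset.cons_erase hb]
      · rw [Multiset.erase_cons_tail _ hab, derM_cons]
    rw [this]
    ring

/-- The evaluation of a polynomial on a finite set of points. -/
def evS (S : Finset ℂˣ) : MvPolynomial ℤ ℂ →ₗ[ℂ] ℂ :=
  (MvPolynomial.lcoeff ℂ 0) ∘ₗ derL S.val

theorem evS_apply (S : Finset ℂˣ) (p : MvPolynomial ℤ ℂ) :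
    evS S p = MvPolynomial.constantCoeff (derM S.val p) := rfl

theorem evS_X_mul (S : Finset ℂˣ) (n : ℤ) (p : MvPolynomial ℤ ℂ) :
    evS S (MvPolynomial.X n * p) = ∑ a ∈ S, ((a ^ n : ℂˣ) : ℂ) * evS (S.erase a) p := by
  rw [evS_apply, derM_X_mul, map_add, map_mul, MvPolynomial.constantCoeff_X, zero_mul, zero_add,
    map_multiset_sum, Multiset.map_map, Finset.sum]
  congr 1
  apply Multiset.map_congr rfl
  intro a _
  simp [evS_apply]

theorem evS_one (S : Finset ℂˣ) : evS S 1 = if S = ∅ then 1 else 0 := by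
  split_ifs with h
  · subst h
    simp [evS_apply, derM_zero]
  · obtain ⟨a, ha⟩ := Finset.nonempty_iff_ne_empty.2 h
    have : S.val = a ::ₘ (S.val.erase a) := (Multiset.cons_erase ha).symm
    rw [evS_apply, this, derM_cons, ← map_one MvPolynomial.C, derD_C]
    have : derM (S.val.erase a) 0 = 0 := map_zero (derL _)
    rw [this, map_zero]

theorem zpow_indep (S : Finset ℂˣ) (s : Finset ℤ) (c : ℤ → ℂ)
    (h : ∀ a : ℂˣ, a ∉ S → ∑ n ∈ s, ((a ^ n : ℂˣ) : ℂ) * c n = 0) : ∀ n ∈ s, c n = 0 := by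
  obtain ⟨N, hN⟩ : ∃ N : ℤ, ∀ n ∈ s, 0 ≤ n + N := by
    obtain ⟨b, hb⟩ := s.bddBelow
    exact ⟨-b, fun n hn => by have := hb hn; linarith⟩
  let P : Polynomial ℂ := ∑ n ∈ s, Polynomial.monomial (n + N).toNat (c n)
  have hP : P = 0 := by
    apply Polynomial.eq_zero_of_infinite_isRoot
    have hinf : (Set.image ((↑) : ℂˣ → ℂ) ((S : Set ℂˣ)ᶜ)).Infinite := by
      apply Set.Infinite.image Units.val_injective.injOn
      have : Infinite ℂˣ := by
        apply Infinite.of_injective (fun n : ℕ => Units.mk0 ((n : ℂ) + 1) (by exact_mod_cast n.succ_ne_zero))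
        intro m n hmn
        simpa using congrArg Units.val hmn
      exact S.finite_toSet.infinite_compl
    refine hinf.mono ?_
    rintro _ ⟨a, ha, rfl⟩
    have h1 := h a ha
    simp only [Set.mem_ofPred_eq, Polynomial.IsRoot, P, Polynomial.eval_finsetSum,
      Polynomial.eval_monomial]
    have : ∑ n ∈ s, c n * (a : ℂ) ^ (n + N).toNat =
        ((a ^ N : ℂˣ) : ℂ) * ∑ n ∈ s, ((a ^ n : ℂˣ) : ℂ) * c n := by
      rw [Finset.mul_sum]
      apply Finset.sum_congr rfl
      intro n hn
      have e : (a : ℂ) ^ (n + N).toNat = ((a ^ n : ℂˣ) : ℂ) * ((a ^ N : ℂˣ) : ℂ) := by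
        rw [← Units.val_mul, ← zpow_add, ← Units.val_pow_eq_pow_val, ← zpow_natCast,
          Int.toNat_of_nonneg (hN n hn)]
      rw [e]; ring
    rw [this, h1, mul_zero]
  intro n hn
  have h2 : P.coeff (n + N).toNat = c n := by
    simp only [P, Polynomial.finsetSum_coeff, Polynomial.coeff_monomial]
    rw [Finset.sum_eq_single n]
    · simp
    · intro b hb hbn
      rw [if_neg]
      intro he
      have := hN b hb
      have := hN n hn
      omega
    · intro h; exact absurd hn h
  rw [← h2, hP, Polynomial.coeff_zero]

theorem der_sum_apply (t : Finset ℤ)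
    (g : ℤ → Derivation ℂ (MvPolynomial ℤ ℂ) (MvPolynomial ℤ ℂ)) (p : MvPolynomial ℤ ℂ) :
    (∑ n ∈ t, g n) p = ∑ n ∈ t, g n p := by
  induction t using Finset.induction_on with
  | empty => simp
  | insert a t ha ih => rw [Finset.sum_insert ha, Finset.sum_insert ha, Derivation.add_apply, ih]

theorem derD_eq_sum (a : ℂˣ) (p : MvPolynomial ℤ ℂ) (t : Finset ℤ) (ht : p.vars ⊆ t) :
    derD a p = ∑ n ∈ t, ((a ^ n : ℂˣ) : ℂ) • MvPolynomial.pderiv n p := by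
  have : ∑ n ∈ t, ((a ^ n : ℂˣ) : ℂ) • MvPolynomial.pderiv n p =
      (∑ n ∈ t, ((a ^ n : ℂˣ) : ℂ) • MvPolynomial.pderiv (R := ℂ) n) p := by
    simp [der_sum_apply]
  rw [this]
  apply MvPolynomial.derivation_eq_of_forall_mem_vars
  intro i hi
  rw [derD_X]
  simp [der_sum_apply, MvPolynomial.pderiv_X, MvPolynomial.smul_eq_C_mul, Pi.single_apply, ht hi]

theorem evS_pderiv (p : MvPolynomial ℤ ℂ) (h : ∀ S, evS S p = 0) (n : ℤ) (S : Finset ℂˣ) :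
    evS S (MvPolynomial.pderiv n p) = 0 := by
  refine zpow_indep S (insert n p.vars) (fun n => evS S (MvPolynomial.pderiv n p)) ?_ n
    (Finset.mem_insert_self _ _)
  intro a ha
  have h1 := h (insert a S)
  rw [evS_apply, Finset.insert_val_of_notMem ha, derM_cons, ← evS_apply,
    derD_eq_sum a p _ (Finset.subset_insert n p.vars), map_sum] at h1
  simpa using h1

theorem evS_injective (p : MvPolynomial ℤ ℂ) (h : ∀ S, evS S p = 0) : p = 0 := by
  ext m
  rw [MvPolynomial.coeff_zero]
  induction hd : m.degree generalizing m p with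
  | zero =>
    have : m = 0 := by simpa [Finsupp.degree_eq_zero_iff] using hd
    subst this
    exact h ∅
  | succ d ih =>
    obtain ⟨n, hn⟩ : ∃ n, m n ≠ 0 := by
      by_contra hc
      push Not at hc
      have : m = 0 := by ext n; exact hc n
      simp [this] at hd
    have hm : m - Finsupp.single n 1 + Finsupp.single n 1 = m := by
      apply tsub_add_cancel_of_le
      simpa [Finsupp.single_le_iff] using Nat.one_le_iff_ne_zero.2 hn
    have h1 := ih (MvPolynomial.pderiv n p) (fun S => evS_pderiv p h n S)
      (m - Finsupp.single n 1) (by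
        rw [← hm, map_add, Finsupp.degree_single] at hd
        omega)
    rw [MvPolynomial.coeff_pderiv, hm] at h1
    rcases mul_eq_zero.1 h1 with h2 | h2
    · exact h2
    · exact absurd h2 (Nat.cast_add_one_ne_zero _)

/-- Product of the variables in a list. -/
def xprod (l : List ℤ) : MvPolynomial ℤ ℂ := (l.map MvPolynomial.X).prod

theorem xprod_eq (l : List ℤ) :
    xprod l = MvPolynomial.monomial (Multiset.toFinsupp (l : Multiset ℤ)) 1 := by
  induction l with
  | nil => simp [xprod]
  | cons n l ih =>
    have : xprod (n :: l) = MvPolynomial.X n * xprod l := by simp [xprod]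
    rw [this, ih, MvPolynomial.X, MvPolynomial.monomial_mul, ← Multiset.cons_coe,
      ← Multiset.singleton_add, map_add, Multiset.toFinsupp_singleton, one_mul]

theorem xprod_indep {ι : Type*} (L : ι → List ℤ)
    (hL : Function.Injective fun i => (L i : Multiset ℤ)) :
    LinearIndependent ℂ fun i => xprod (L i) := by
  have h := (MvPolynomial.basisMonomials ℤ ℂ).linearIndependent.comp
    (fun i => Multiset.toFinsupp (L i : Multiset ℤ)) (Multiset.toFinsupp.injective.comp hL)
  have e : (fun i => xprod (L i)) = ((MvPolynomial.basisMonomials ℤ ℂ) ∘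
      fun i => Multiset.toFinsupp (L i : Multiset ℤ)) := by
    ext1 i
    simp [xprod_eq]
  rw [e]
  exact h

theorem evS_indep {ι : Type*} (L : ι → List ℤ)
    (hL : Function.Injective fun i => (L i : Multiset ℤ)) :
    LinearIndependent ℂ fun i => (fun S : Finset ℂˣ => evS S (xprod (L i))) := by
  have h := (xprod_indep L hL).map' (LinearMap.pi evS) (by
    rw [LinearMap.ker_eq_bot']
    intro p hp
    exact evS_injective p fun S => congrFun hp S)
  exact h

/-! ## The representation of `U₋` on functions on finite sets of points -/

/-- The structure function `(a - b - ℏ) / (a - b)`. -/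
def gfun (a b : ℂˣ) : R := 1 - PowerSeries.C (((a : ℂ) - b)⁻¹) * hbar

/-- constants `a ^ n` in `R`. -/
def apow (a : ℂˣ) (n : ℤ) : R := PowerSeries.C (((a ^ n : ℂˣ) : ℂ))

theorem apow_succ (a : ℂˣ) (n : ℤ) : apow a (n + 1) = apow a n * PowerSeries.C (a : ℂ) := by
  rw [apow, apow, zpow_add, zpow_one, Units.val_mul, map_mul]

/-- The operator by which `f n` acts. -/
def Fop (n : ℤ) : Module.End R (Finset ℂˣ → R) where
  toFun v S := ∑ a ∈ S, apow a n * (∏ b ∈ S.erase a, gfun a b) * v (S.erase a)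
  map_add' v w := by
    ext1 S
    simp [mul_add, Finset.sum_add_distrib]
  map_smul' c v := by
    ext1 S
    simp only [Pi.smul_apply, smul_eq_mul, RingHom.id_apply, Finset.mul_sum]
    exact Finset.sum_congr rfl fun a _ => by ring

theorem Fop_apply (n : ℤ) (v : Finset ℂˣ → R) (S : Finset ℂˣ) :
    Fop n v S = ∑ a ∈ S, apow a n * (∏ b ∈ S.erase a, gfun a b) * v (S.erase a) := rfl

/-- The common factor in products of two operators. -/
def Gfac (v : Finset ℂˣ → R) (S : Finset ℂˣ) (a b : ℂˣ) : R :=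
  (∏ c ∈ (S.erase a).erase b, gfun a c * gfun b c) * v ((S.erase a).erase b)

theorem Gfac_symm (v : Finset ℂˣ → R) (S : Finset ℂˣ) (a b : ℂˣ) :
    Gfac v S a b = Gfac v S b a := by
  rw [Gfac, Gfac, Finset.erase_right_comm]
  simp only [mul_comm]

theorem Fop_mul_apply (m n : ℤ) (v : Finset ℂˣ → R) (S : Finset ℂˣ) :
    (Fop m * Fop n) v S =
      ∑ a ∈ S, ∑ b ∈ S.erase a, apow a m * apow b n * (gfun a b * Gfac v S a b) := by
  rw [Module.End.mul_apply, Fop_apply]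
  apply Finset.sum_congr rfl
  intro a _
  rw [Fop_apply, Finset.mul_sum]
  apply Finset.sum_congr rfl
  intro b hb
  rw [Gfac, Finset.prod_mul_distrib, ← Finset.mul_prod_erase _ _ hb]
  ring

theorem gfun_key (a b : ℂˣ) (hab : a ≠ b) :
    (PowerSeries.C (a : ℂ) - PowerSeries.C (b : ℂ) + hbar) * gfun a b =
      - ((PowerSeries.C (b : ℂ) - PowerSeries.C (a : ℂ) + hbar) * gfun b a) := by
  have hne : (a : ℂ) - b ≠ 0 := sub_ne_zero.2 fun h => hab (Units.ext h)
  have e1 : (PowerSeries.C (a : ℂ) - PowerSeries.C (b : ℂ)) *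
      (PowerSeries.C (((a : ℂ) - b)⁻¹) : R) = 1 := by
    rw [← map_sub, ← map_mul, mul_inv_cancel₀ hne, map_one]
  have e2 : (PowerSeries.C (((b : ℂ) - a)⁻¹) : R) = - PowerSeries.C (((a : ℂ) - b)⁻¹) := by
    rw [← map_neg, ← inv_neg, neg_sub]
  rw [gfun, gfun, e2]
  linear_combination (-2 * hbar) * e1

theorem half_mul_two : (PowerSeries.C (1 / 2 : ℂ) : R) * 2 = 1 := by
  have : (2 : R) = PowerSeries.C (2 : ℂ) := (map_ofNat PowerSeries.C 2).symm
  rw [this, ← map_mul]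
  norm_num

theorem antisymm_sum (S : Finset ℂˣ) (h : ℂˣ → ℂˣ → R)
    (hh : ∀ a b, a ≠ b → h a b = - h b a) : ∑ a ∈ S, ∑ b ∈ S.erase a, h a b = 0 := by
  have e : ∑ a ∈ S, ∑ b ∈ S.erase a, h a b = ∑ b ∈ S, ∑ a ∈ S.erase b, h a b := by
    apply Finset.sum_comm'
    intro x y
    simp only [Finset.mem_erase]
    tauto
  have e2 : ∑ b ∈ S, ∑ a ∈ S.erase b, h a b = - ∑ b ∈ S, ∑ a ∈ S.erase b, h b a := by
    rw [← Finset.sum_neg_distrib]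
    apply Finset.sum_congr rfl
    intro b _
    rw [← Finset.sum_neg_distrib]
    apply Finset.sum_congr rfl
    intro a ha
    exact hh a b (Finset.mem_erase.1 ha).1
  rw [e2] at e
  linear_combination PowerSeries.C (1 / 2 : ℂ) * e -
    (∑ a ∈ S, ∑ b ∈ S.erase a, h a b) * half_mul_two

theorem Fop_rel (m n : ℤ) :
    Fop (m + 1) * Fop n - Fop n * Fop (m + 1) - Fop m * Fop (n + 1) + Fop (n + 1) * Fop m =
      -(hbar • (Fop m * Fop n + Fop n * Fop m)) := by
  rw [← sub_eq_zero, sub_neg_eq_add]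
  ext1 v
  ext1 S
  simp only [LinearMap.add_apply, LinearMap.sub_apply, LinearMap.smul_apply, Pi.add_apply,
    Pi.sub_apply, Pi.smul_apply, smul_eq_mul, LinearMap.zero_apply, Pi.zero_apply, Fop_mul_apply]
  rw [← antisymm_sum S (fun a b => (apow a m * apow b n + apow a n * apow b m) *
    ((PowerSeries.C (a : ℂ) - PowerSeries.C (b : ℂ) + hbar) * gfun a b) * Gfac v S a b)]
  · simp only [← Finset.sum_add_distrib, ← Finset.sum_sub_distrib, Finset.mul_sum]
    apply Finset.sum_congr rfl
    intro a _
    apply Finset.sum_congr rfl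
    intro b _
    simp only [apow_succ]
    ring
  · intro a b hab
    rw [gfun_key a b hab, Gfac_symm]
    ring

/-- The representation. -/
def rho : Uminus →ₐ[R] Module.End R (Finset ℂˣ → R) :=
  RingQuot.liftAlgHom R ⟨FreeAlgebra.lift R Fop, by
    rintro _ _ ⟨m, n⟩
    simp only [Fgen, map_add, map_sub, map_mul, map_neg, map_smul, FreeAlgebra.lift_ι_apply]
    exact Fop_rel m n⟩

theorem rho_f (n : ℤ) : rho (f n) = Fop n := by
  rw [rho, f, RingQuot.liftAlgHom_mkAlgHom_apply, Fgen, FreeAlgebra.lift_ι_apply]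

/-- Product of generators along a list. -/
def fprod (l : List ℤ) : Uminus := (l.map f).prod

theorem fprod_nil : fprod [] = 1 := rfl

theorem fprod_cons (n : ℤ) (l : List ℤ) : fprod (n :: l) = f n * fprod l := by
  simp [fprod]

theorem fprod_append (l l' : List ℤ) : fprod (l ++ l') = fprod l * fprod l' := by
  simp [fprod]

/-- The vacuum vector. -/
def vac : Finset ℂˣ → R := fun S => if S = ∅ then 1 else 0

theorem constCoeff_gfun (a b : ℂˣ) : PowerSeries.constantCoeff (gfun a b) = 1 := by
  simp [gfun, hbar]

theorem constCoeff_rho (l : List ℤ) (S : Finset ℂˣ) :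
    PowerSeries.constantCoeff (rho (fprod l) vac S) = evS S (xprod l) := by
  induction l generalizing S with
  | nil =>
    have : xprod [] = 1 := rfl
    rw [fprod_nil, map_one, this, evS_one, Module.End.one_apply, vac]
    split_ifs <;> simp
  | cons n l ih =>
    have : xprod (n :: l) = MvPolynomial.X n * xprod l := by simp [xprod]
    rw [fprod_cons, map_mul, Module.End.mul_apply, rho_f, Fop_apply, this, evS_X_mul, map_sum]
    apply Finset.sum_congr rfl
    intro a _
    rw [map_mul, map_mul, map_prod, ih]
    simp [constCoeff_gfun, apow]

theorem indep_of_constCoeff {ι T : Type*} (v : ι → T → R)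
    (h : LinearIndependent ℂ fun i => fun t => PowerSeries.constantCoeff (v i t)) :
    LinearIndependent R v := by
  rw [linearIndependent_iff'] at h ⊢
  intro s c hc i hi
  have key : ∀ (d : ℕ) (c : ι → R), ∑ i ∈ s, c i • v i = 0 →
      ∀ i ∈ s, PowerSeries.coeff d (c i) = 0 := by
    intro d
    induction d with
    | zero =>
      intro c hc i hi
      rw [PowerSeries.coeff_zero_eq_constantCoeff_apply]
      refine h s (fun i => PowerSeries.constantCoeff (c i)) ?_ i hi
      ext1 t
      have := congrArg PowerSeries.constantCoeff (congrFun hc t)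
      simpa [Finset.sum_apply, map_sum] using this
    | succ d ih =>
      intro c hc i hi
      have h0 : ∀ i ∈ s, PowerSeries.constantCoeff (c i) = 0 := by
        intro i hi
        refine h s (fun i => PowerSeries.constantCoeff (c i)) ?_ i hi
        ext1 t
        have := congrArg PowerSeries.constantCoeff (congrFun hc t)
        simpa [Finset.sum_apply, map_sum] using this
      let c' : ι → R := fun i => PowerSeries.mk fun n => PowerSeries.coeff (n + 1) (c i)
      have hc' : ∀ i ∈ s, c i = PowerSeries.X * c' i := by
        intro i hi
        have := PowerSeries.eq_X_mul_shift_add_const (c i)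
        rw [h0 i hi, map_zero, add_zero] at this
        exact this
      have h1 : ∑ i ∈ s, c' i • v i = 0 := by
        ext1 t
        have h2 := congrFun hc t
        simp only [Finset.sum_apply, Pi.smul_apply, smul_eq_mul, Pi.zero_apply] at h2 ⊢
        have h3 : PowerSeries.X * ∑ i ∈ s, c' i * v i t = 0 := by
          rw [← h2, Finset.mul_sum]
          apply Finset.sum_congr rfl
          intro i hi
          rw [hc' i hi, mul_assoc]
        exact (mul_eq_zero.1 h3).resolve_left PowerSeries.X_ne_zero
      have := ih c' h1 i hi
      simpa [c'] using this
  ext d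
  rw [key d c hc i hi, map_zero]

theorem fprod_indep {ι : Type*} (L : ι → List ℤ)
    (hL : Function.Injective fun i => (L i : Multiset ℤ)) :
    LinearIndependent R fun i => fprod (L i) := by
  let φ : Uminus →ₗ[R] (Finset ℂˣ → R) := (LinearMap.applyₗ vac) ∘ₗ rho.toLinearMap
  apply LinearIndependent.of_comp φ
  apply indep_of_constCoeff
  have := evS_indep L hL
  simpa only [φ, Function.comp_apply, LinearMap.coe_comp, LinearMap.applyₗ_apply_apply,
    AlgHom.toLinearMap_apply, constCoeff_rho] using this

/-! ## Straightening -/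

theorem f_rel (m n : ℤ) :
    f (m + 1) * f n - f n * f (m + 1) - f m * f (n + 1) + f (n + 1) * f m =
      -(hbar • (f m * f n + f n * f m)) := by
  have := RingQuot.mkAlgHom_rel R (FRel.current m n)
  simp only [map_add, map_sub, map_mul, map_neg, map_smul] at this
  exact this

/-- The current relations for a family of elements of an algebra. -/
def CurRel {A : Type*} [Ring A] [Algebra R A] (φ : ℤ → A) : Prop :=
  ∀ m n : ℤ, φ (m + 1) * φ n - φ n * φ (m + 1) - φ m * φ (n + 1) + φ (n + 1) * φ m =
      -(hbar • (φ m * φ n + φ n * φ m))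

theorem f_curRel : CurRel f := f_rel

section Generic

set_option linter.unusedSectionVars false

variable {A : Type*} [Ring A] [Algebra R A] {φ : ℤ → A}

/-- Product of a family along a list. -/
def gprod (φ : ℤ → A) (l : List ℤ) : A := (l.map φ).prod

theorem gprod_cons (n : ℤ) (l : List ℤ) : gprod φ (n :: l) = φ n * gprod φ l := by
  simp [gprod]

theorem gprod_append (l l' : List ℤ) : gprod φ (l ++ l') = gprod φ l * gprod φ l' := by
  simp [gprod]

/-- Entries of the list lie in the box `[lo, hi]`. -/
def InBox (lo hi : ℤ) (l : List ℤ) : Prop := ∀ x ∈ l, lo ≤ x ∧ x ≤ hi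

/-- The weight of a list. -/
def wt (lo : ℤ) (l : List ℤ) : ℤ := (l.map fun x => x - lo).sum

theorem wt_cons (lo x : ℤ) (l : List ℤ) : wt lo (x :: l) = (x - lo) + wt lo l := by
  simp [wt]

theorem wt_nonneg {lo hi : ℤ} {l : List ℤ} (h : InBox lo hi l) : 0 ≤ wt lo l := by
  apply List.sum_nonneg
  intro y hy
  obtain ⟨x, hx, rfl⟩ := List.mem_map.1 hy
  have := (h x hx).1
  omega

/-- Span of the monomials in the box of weight less than `N`. -/
def Wlt (φ : ℤ → A) (lo hi N : ℤ) : Submodule R A :=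
  Submodule.span R {u | ∃ l, InBox lo hi l ∧ wt lo l < N ∧ u = gprod φ l}

theorem gprod_mem_Wlt {lo hi N : ℤ} {l : List ℤ} (h : InBox lo hi l) (hN : wt lo l < N) :
    gprod φ l ∈ Wlt φ lo hi N := Submodule.subset_span ⟨l, h, hN, rfl⟩

theorem Wlt_mul {lo hi M N : ℤ} {u : A} (hu : u ∈ Wlt φ lo hi M) {l : List ℤ}
    (hl : InBox lo hi l) (hN : M + wt lo l ≤ N) : u * gprod φ l ∈ Wlt φ lo hi N := by
  induction hu using Submodule.span_induction with
  | mem x hx =>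
    obtain ⟨l', h1, h2, rfl⟩ := hx
    rw [← gprod_append]
    apply gprod_mem_Wlt
    · intro x hx
      rcases List.mem_append.1 hx with h | h
      exacts [h1 x h, hl x h]
    · have : wt lo (l' ++ l) = wt lo l' + wt lo l := by simp [wt]
      omega
  | zero => rw [zero_mul]; exact zero_mem _
  | add x y _ _ hx hy => rw [add_mul]; exact add_mem hx hy
  | smul c x _ hx => rw [smul_mul_assoc]; exact Submodule.smul_mem _ _ hx

theorem mul_Wlt {lo hi M N : ℤ} {u : A} (hu : u ∈ Wlt φ lo hi M) {x : ℤ}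
    (hl : lo ≤ x ∧ x ≤ hi) (hN : M + (x - lo) ≤ N) : φ x * u ∈ Wlt φ lo hi N := by
  induction hu using Submodule.span_induction with
  | mem y hx =>
    obtain ⟨l', h1, h2, rfl⟩ := hx
    rw [← gprod_cons]
    apply gprod_mem_Wlt
    · intro y hy
      rcases List.mem_cons.1 hy with h | h
      · rw [h]; exact hl
      · exact h1 y h
    · rw [wt_cons]
      omega
  | zero => rw [mul_zero]; exact zero_mem _
  | add x y _ _ hx hy => rw [mul_add]; exact add_mem hx hy
  | smul c x _ hx => rw [mul_smul_comm]; exact Submodule.smul_mem _ _ hx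

theorem pair_mem {lo hi N a b : ℤ} (ha : lo ≤ a ∧ a ≤ hi) (hb : lo ≤ b ∧ b ≤ hi)
    (hN : a + b - 2 * lo < N) : φ a * φ b ∈ Wlt φ lo hi N := by
  have : φ a * φ b = gprod φ [a, b] := by simp [gprod]
  rw [this]
  apply gprod_mem_Wlt
  · intro x hx
    simp only [List.mem_cons, List.not_mem_nil, or_false] at hx
    rcases hx with rfl | rfl <;> assumption
  · simp [wt]
    omega

theorem comm_aux (hφ : CurRel φ) (lo hi : ℤ) (d : ℕ) : ∀ n : ℤ, lo ≤ n → n + d ≤ hi →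
    φ (n + d) * φ n - φ n * φ (n + d) ∈ Wlt φ lo hi (2 * n + d - 2 * lo) := by
  induction d using Nat.strong_induction_on with
  | _ d ih =>
    intro n h1 h2
    match d, ih, h2 with
    | 0, _, _ => simp
    | 1, _, h2 =>
      have e := hφ n n
      have e2 : φ (n + 1) * φ n - φ n * φ (n + 1) = -(hbar • (φ n * φ n)) := by
        have e3 : (2 : R) • (φ (n + 1) * φ n - φ n * φ (n + 1)) =
            (2 : R) • (-(hbar • (φ n * φ n))) := by
          rw [two_smul, two_smul]
          rw [smul_add] at e
          rw [← neg_add, ← e]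
          abel
        have e4 := congrArg (fun u => (PowerSeries.C (1 / 2 : ℂ) : R) • u) e3
        simpa only [smul_smul, half_mul_two, one_smul] using e4
      push_cast at h2 ⊢
      rw [e2]
      exact neg_mem (Submodule.smul_mem _ _ (pair_mem ⟨h1, by omega⟩ ⟨h1, by omega⟩ (by omega)))
    | d + 2, ih, h2 =>
      have e := hφ (n + d + 1) n
      have hi1 := ih d (by omega) (n + 1) (by omega) (by push_cast at h2; omega)
      have a1 : n + ((d + 2 : ℕ) : ℤ) = n + d + 1 + 1 := by push_cast; ring
      have a2 : n + 1 + (d : ℤ) = n + d + 1 := by ring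
      have a3 : 2 * (n + 1) + (d : ℤ) - 2 * lo = 2 * n + ((d + 2 : ℕ) : ℤ) - 2 * lo := by
        push_cast; ring
      rw [a2, a3] at hi1
      rw [a1] at h2 ⊢
      have e2 : φ (n + d + 1 + 1) * φ n - φ n * φ (n + d + 1 + 1) =
          (φ (n + d + 1) * φ (n + 1) - φ (n + 1) * φ (n + d + 1)) -
            hbar • (φ (n + d + 1) * φ n + φ n * φ (n + d + 1)) := by
        rw [sub_eq_add_neg _ (hbar • _), ← e]
        abel
      rw [e2]
      refine sub_mem hi1 (Submodule.smul_mem _ _ (add_mem ?_ ?_))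
      · exact pair_mem ⟨by omega, by omega⟩ ⟨by omega, by omega⟩ (by push_cast; omega)
      · exact pair_mem ⟨by omega, by omega⟩ ⟨by omega, by omega⟩ (by push_cast; omega)

theorem comm_mem (hφ : CurRel φ) {lo hi a b : ℤ} (ha : lo ≤ a ∧ a ≤ hi) (hb : lo ≤ b ∧ b ≤ hi) :
    φ a * φ b - φ b * φ a ∈ Wlt φ lo hi (a + b - 2 * lo) := by
  rcases le_total b a with h | h
  · obtain ⟨d, rfl⟩ := Int.le.dest h
    have := comm_aux hφ lo hi d b hb.1 ha.2
    rwa [show b + (d : ℤ) + b - 2 * lo = 2 * b + d - 2 * lo by ring]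
  · obtain ⟨d, rfl⟩ := Int.le.dest h
    have := comm_aux hφ lo hi d a ha.1 hb.2
    rw [show a + (a + (d : ℤ)) - 2 * lo = 2 * a + d - 2 * lo by ring]
    have h3 := neg_mem this
    rwa [neg_sub] at h3

theorem wt_perm {lo : ℤ} {l l' : List ℤ} (h : l.Perm l') : wt lo l = wt lo l' :=
  (h.map _).sum_eq

theorem perm_mem (hφ : CurRel φ) {lo hi : ℤ} {l l' : List ℤ} (h : l.Perm l') (hl : InBox lo hi l) :
    gprod φ l - gprod φ l' ∈ Wlt φ lo hi (wt lo l) := by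
  induction h with
  | nil => simp
  | cons x h ih =>
    rw [gprod_cons, gprod_cons, ← mul_sub]
    refine mul_Wlt (ih fun y hy => hl y (List.mem_cons_of_mem _ hy))
      (hl x List.mem_cons_self) ?_
    rw [wt_cons]
    omega
  | swap x y l =>
    have hx := hl x (by simp)
    have hy := hl y (by simp)
    have e : gprod φ (y :: x :: l) - gprod φ (x :: y :: l) = (φ y * φ x - φ x * φ y) * gprod φ l := by
      simp only [gprod_cons, sub_mul, mul_assoc]
    rw [e]
    refine Wlt_mul (comm_mem hφ hy hx) (fun z hz => hl z (by simp [hz])) ?_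
    rw [wt_cons, wt_cons]
    omega
  | trans h1 h2 ih1 ih2 =>
    have := add_mem (ih1 hl) (by
      rw [wt_perm h1]
      exact ih2 fun y hy => hl y (h1.mem_iff.2 hy))
    simpa using this

/-- Every monomial in a box is a combination of chosen rearrangements of monomials in the box. -/
theorem straighten_G (hφ : CurRel φ) (g : List ℤ → List ℤ) (hg : ∀ l : List ℤ, l.Perm (g l)) {lo hi : ℤ} (l : List ℤ)
    (hl : InBox lo hi l) :
    gprod φ l ∈ Submodule.span R {u | ∃ l', InBox lo hi l' ∧ u = gprod φ (g l')} := by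
  obtain ⟨N, hN⟩ := Int.eq_ofNat_of_zero_le (wt_nonneg hl)
  induction N using Nat.strong_induction_on generalizing l with
  | _ N ih =>
    have h1 := perm_mem hφ (hg l) hl
    have h2 : Wlt φ lo hi (wt lo l) ≤
        Submodule.span R {u | ∃ l', InBox lo hi l' ∧ u = gprod φ (g l')} := by
      apply Submodule.span_le.2
      rintro _ ⟨l', h3, h4, rfl⟩
      obtain ⟨M, hM⟩ := Int.eq_ofNat_of_zero_le (wt_nonneg h3)
      exact ih M (by omega) l' h3 hM
    have h3 := add_mem (h2 h1) (Submodule.subset_span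
      (show gprod φ (g l) ∈ {u | ∃ l', InBox lo hi l' ∧ u = gprod φ (g l')} from ⟨l, hl, rfl⟩))
    simpa using h3

end Generic

theorem straighten (g : List ℤ → List ℤ) (hg : ∀ l : List ℤ, l.Perm (g l)) {lo hi : ℤ}
    (l : List ℤ) (hl : InBox lo hi l) :
    fprod l ∈ Submodule.span R {u | ∃ l', InBox lo hi l' ∧ u = fprod (g l')} :=
  straighten_G f_curRel g hg l hl

/-! ## The triangular decomposition -/

theorem exists_box (l : List ℤ) : ∃ lo hi : ℤ, InBox lo hi l := by
  obtain ⟨lo, hlo⟩ := l.toFinset.bddBelow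
  obtain ⟨hi, hhi⟩ := l.toFinset.bddAbove
  exact ⟨lo, hi, fun x hx => ⟨hlo (by simpa using hx), hhi (by simpa using hx)⟩⟩

/-- Multisets all of whose entries satisfy a predicate. -/
abbrev MP (P : ℤ → Prop) : Type := {s : Multiset ℤ // ∀ x ∈ s, P x}

theorem adjoin_span (P : ℤ → Prop)
    (hP : ∀ l : List ℤ, (∀ x ∈ l, P x) → ∃ lo hi, InBox lo hi l ∧ ∀ x, lo ≤ x → x ≤ hi → P x) :
    Subalgebra.toSubmodule (Algebra.adjoin R {u : Uminus | ∃ n, P n ∧ u = f n}) =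
      Submodule.span R (Set.range fun s : MP P => fprod s.1.toList) := by
  apply le_antisymm
  · rw [Algebra.adjoin_eq_span, Submodule.span_le]
    intro u hu
    obtain ⟨l, hl, rfl⟩ : ∃ l : List ℤ, (∀ x ∈ l, P x) ∧ u = fprod l := by
      induction hu using Submonoid.closure_induction with
      | mem x hx =>
        obtain ⟨n, hn, rfl⟩ := hx
        exact ⟨[n], by simpa using hn, by simp [fprod]⟩
      | one => exact ⟨[], by simp, rfl⟩
      | mul x y _ _ hx hy =>
        obtain ⟨l, hl, rfl⟩ := hx
        obtain ⟨l', hl', rfl⟩ := hy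
        refine ⟨l ++ l', ?_, (fprod_append _ _).symm⟩
        intro x hx
        rcases List.mem_append.1 hx with h | h
        exacts [hl x h, hl' x h]
    obtain ⟨lo, hi, hb, hPb⟩ := hP l hl
    have h := straighten (fun l => (l : Multiset ℤ).toList)
      (fun l => Multiset.coe_eq_coe.1 (Multiset.coe_toList _).symm) l hb
    refine Submodule.span_mono ?_ h
    rintro _ ⟨l', hl', rfl⟩
    exact ⟨⟨(l' : Multiset ℤ), fun x hx => hPb x (hl' x hx).1 (hl' x hx).2⟩, rfl⟩
  · rw [Submodule.span_le]
    rintro _ ⟨s, rfl⟩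
    apply Subalgebra.list_prod_mem
    intro u hu
    obtain ⟨n, hn, rfl⟩ := List.mem_map.1 hu
    exact Algebra.subset_adjoin ⟨n, s.2 n (Multiset.mem_toList.1 hn), rfl⟩

theorem Umge_span : Subalgebra.toSubmodule Umge =
    Submodule.span R (Set.range fun s : MP (fun x => 0 ≤ x) => fprod s.1.toList) := by
  rw [← adjoin_span]
  · rw [Umge]
    congr 2
    ext u
    constructor
    · rintro ⟨n, rfl⟩
      exact ⟨n, by positivity, rfl⟩
    · rintro ⟨n, hn, rfl⟩
      obtain ⟨k, rfl⟩ := Int.eq_ofNat_of_zero_le hn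
      exact ⟨k, rfl⟩
  · intro l hl
    obtain ⟨lo, hi, h⟩ := exists_box l
    exact ⟨0, hi, fun x hx => ⟨hl x hx, (h x hx).2⟩, fun x hx _ => hx⟩

theorem Umlt_span : Subalgebra.toSubmodule Umlt =
    Submodule.span R (Set.range fun s : MP (fun x => x < 0) => fprod s.1.toList) := by
  rw [← adjoin_span]
  · rfl
  · intro l hl
    obtain ⟨lo, hi, h⟩ := exists_box l
    exact ⟨lo, -1, fun x hx => ⟨(h x hx).1, by have := hl x hx; omega⟩, fun x _ hx => by omega⟩

theorem top_span : (⊤ : Submodule R Uminus) ≤ Submodule.span R (Set.range fprod) := by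
  intro u _
  obtain ⟨w, rfl⟩ := RingQuot.mkAlgHom_surjective R FRel u
  induction w using FreeAlgebra.induction with
  | grade0 r =>
    rw [AlgHom.commutes, Algebra.algebraMap_eq_smul_one]
    exact Submodule.smul_mem _ _ (Submodule.subset_span ⟨[], rfl⟩)
  | grade1 n =>
    exact Submodule.subset_span ⟨[n], by simp [fprod, f, Fgen]⟩
  | mul a b ha hb =>
    rw [map_mul]
    have h := Submodule.mul_mem_mul (ha trivial) (hb trivial)
    rw [Submodule.span_mul_span] at h
    refine Submodule.span_mono ?_ h
    rintro _ ⟨_, ⟨l, rfl⟩, _, ⟨l', rfl⟩, rfl⟩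
    exact ⟨l ++ l', fprod_append _ _⟩
  | add a b ha hb =>
    rw [map_add]
    exact add_mem (ha trivial) (hb trivial)

theorem decomp (P Q : ℤ → Prop) [DecidablePred P] (hPQ : ∀ x, Q x ↔ ¬ P x)
    (M N : Submodule R Uminus)
    (hM : M = Submodule.span R (Set.range fun s : MP P => fprod s.1.toList))
    (hN : N = Submodule.span R (Set.range fun s : MP Q => fprod s.1.toList)) :
    Function.Bijective (Submodule.mulMap M N) := by
  have iP : LinearIndependent R fun s : MP P => fprod s.1.toList :=
    fprod_indep _ fun s t h => Subtype.ext (by simpa using h)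
  have iQ : LinearIndependent R fun s : MP Q => fprod s.1.toList :=
    fprod_indep _ fun s t h => Subtype.ext (by simpa using h)
  have fP : ∀ s : MP P, s.1.filter P = s.1 := fun s => Multiset.filter_eq_self.2 s.2
  have fQ : ∀ s : MP Q, s.1.filter P = 0 := fun s =>
    Multiset.filter_eq_nil.2 fun x hx => (hPQ x).1 (s.2 x hx)
  have iPQ : LinearIndependent R
      fun i : MP P × MP Q => fprod (i.1.1.toList ++ i.2.1.toList) := by
    apply fprod_indep
    rintro ⟨s, t⟩ ⟨s', t'⟩ h
    simp only [← Multiset.coe_add, Multiset.coe_toList] at h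
    have h1 := congrArg (Multiset.filter P) h
    rw [Multiset.filter_add, Multiset.filter_add, fP, fP, fQ, fQ, add_zero, add_zero] at h1
    rw [h1] at h
    rw [Subtype.ext h1, Subtype.ext (add_left_cancel h)]
  constructor
  · subst hM hN
    have hd := Submodule.LinearDisjoint.of_basis_mul' _ _ (Module.Basis.span iP)
      (Module.Basis.span iQ) (by
        simp only [Module.Basis.span_apply, ← fprod_append]
        exact iPQ)
    exact hd.injective
  · rw [← LinearMap.range_eq_top, Submodule.mulMap_range, eq_top_iff]
    refine top_span.trans (Submodule.span_le.2 ?_)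
    rintro _ ⟨l, rfl⟩
    obtain ⟨lo, hi, hb⟩ := exists_box l
    have h := straighten (fun l => ((l : Multiset ℤ).filter P).toList ++
        ((l : Multiset ℤ).filter (fun x => ¬ P x)).toList) (fun l => by
      apply Multiset.coe_eq_coe.1
      rw [← Multiset.coe_add, Multiset.coe_toList, Multiset.coe_toList,
        Multiset.filter_add_not]) l hb
    refine Submodule.span_le.2 ?_ h
    rintro _ ⟨l', _, rfl⟩
    rw [fprod_append, hM, hN]
    apply Submodule.mul_mem_mul
    · exact Submodule.subset_span ⟨⟨(l' : Multiset ℤ).filter P,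
        fun x hx => (Multiset.mem_filter.1 hx).2⟩, rfl⟩
    · exact Submodule.subset_span
        ⟨⟨(l' : Multiset ℤ).filter (fun x => ¬ P x), fun x hx => (hPQ x).2 (Multiset.mem_filter.1 hx).2⟩, rfl⟩

/-- both multiplication maps `U₋^{≥0} ⊗_R U₋^{<0} → U₋` and
`U₋^{<0} ⊗_R U₋^{≥0} → U₋` are bijective. -/
theorem mulMap_minus_bijective :
    Function.Bijective
      (Submodule.mulMap (Subalgebra.toSubmodule Umge) (Subalgebra.toSubmodule Umlt)) ∧
    Function.Bijective
      (Submodule.mulMap (Subalgebra.toSubmodule Umlt) (Subalgebra.toSubmodule Umge)) := by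
  exact ⟨decomp (fun x => 0 ≤ x) (fun x => x < 0) (fun x => not_le.symm) _ _ Umge_span Umlt_span,
    decomp (fun x => x < 0) (fun x => 0 ≤ x) (fun x => not_lt.symm) _ _ Umlt_span Umge_span⟩

end
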